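/- Let K ⊆ ℝ be a Cantor set with packing dimension strictly less than 1/2. Then there exists a set X ⊆ ℝ which is not Lebesgue null (has positive outer measure) such that for every t ∈ ℝ, the intersection K ∩ (X + t) has at most one element. -/

import Mathlib

open Filter Set MeasureTheory
open scoped Pointwise ENNReal

/-- Minimal number of `ε`-balls needed to cover `s` (as an element of `ℝ≥0∞`,
`⊤` if no finite cover exists). -/
noncomputable def coverN {α : Type*} [PseudoMetricSpace α] (s : Set α) (ε : ℝ) : ℝ≥0∞ :=
  ⨅ (t : Finset α) (_ : s ⊆ ⋃ x ∈ t, Metric.ball x ε), (t.card : ℝ≥0∞)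

open Classical in
/-- Upper box (Minkowski) dimension. -/
noncomputable def ubDim {α : Type*} [PseudoMetricSpace α] (s : Set α) : ℝ≥0∞ :=
  Filter.limsup (fun ε : ℝ =>
      if coverN s ε = ⊤ then ⊤
      else ENNReal.ofReal (Real.log (coverN s ε).toReal / Real.log ε⁻¹))
    (nhdsWithin (0 : ℝ) (Set.Ioi 0))

/-- Packing dimension, defined as modified upper box dimension. -/
noncomputable def packingDim {α : Type*} [PseudoMetricSpace α] (s : Set α) : ℝ≥0∞ :=
  ⨅ (A : ℕ → Set α) (_ : s ⊆ ⋃ n, A n), ⨆ n, ubDim (A n)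

open Module
open scoped NNReal Topology

/-!
The differences of distinct points of `X` have to avoid `D = K - K`, whose packing dimension is less
than `d = dim E`. If `D` has a box-counting exponent `s < d`, then the `n`-tuples whose entries all
lie in one translate of `D` form a set of exponent `n * s + d < n * d` for large `n`, so its closure
is null. Mycielski's theorem, applied inside the support of the measure, then finds in every set of
positive measure a Cantor set on which each translate of `D` contains fewer than `n` points. In
general `D` is a countable union of such sets, so countably many points replace fewer than `n`, and
fewer than continuum many translates of `D` cannot cover a set of positive measure. Transfinite
recursion over the measurable sets of positive measure now chooses `X` meeting all of them.
-/

section BoxExponent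

variable {α β : Type*} [PseudoMetricSpace α] [PseudoMetricSpace β]

/-- `s` is a box-counting exponent of `A`: for small `ε` the set `A` is covered by `O(ε⁻ˢ)` balls of
radius `ε`. The upper box dimension of `A` is the infimum of its box-counting exponents. -/
def HasBoxExponent (A : Set α) (s : ℝ≥0) : Prop :=
  ∃ C : ℝ, ∀ᶠ ε : ℝ in 𝓝[>] 0, ∃ T : Finset α,
    A ⊆ ⋃ x ∈ T, Metric.ball x ε ∧ (T.card : ℝ) ≤ C * ε ^ (-s : ℝ)

theorem HasBoxExponent.mono {A B : Set α} {s : ℝ≥0} (hB : HasBoxExponent B s) (hAB : A ⊆ B) :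
    HasBoxExponent A s := by
  obtain ⟨C, hC⟩ := hB
  exact ⟨C, hC.mono fun ε ⟨T, hT, hcard⟩ => ⟨T, hAB.trans hT, hcard⟩⟩

theorem HasBoxExponent.of_ball_mul {A : Set α} {s : ℝ≥0} {b C : ℝ} (hb : 0 < b)
    (h : ∀ᶠ ε : ℝ in 𝓝[>] 0, ∃ T : Finset α,
      A ⊆ ⋃ x ∈ T, Metric.ball x (b * ε) ∧ (T.card : ℝ) ≤ C * ε ^ (-s : ℝ)) :
    HasBoxExponent A s := by
  have hscale : Tendsto (fun ε : ℝ => ε / b) (𝓝[>] 0) (𝓝[>] 0) := by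
    refine tendsto_nhdsWithin_iff.2 ⟨?_, ?_⟩
    · exact ((continuous_id.div_const b).tendsto' 0 0 (zero_div b)).mono_left nhdsWithin_le_nhds
    · filter_upwards [self_mem_nhdsWithin] with ε hε using div_pos hε hb
  refine ⟨C * b⁻¹ ^ (-s : ℝ), ?_⟩
  filter_upwards [hscale.eventually h, self_mem_nhdsWithin] with ε ⟨T, hT, hcard⟩ hε
  refine ⟨T, by rwa [mul_div_cancel₀ ε hb.ne'] at hT, hcard.trans_eq ?_⟩
  rw [div_eq_inv_mul, Real.mul_rpow (inv_nonneg.2 hb.le) (le_of_lt hε), mul_assoc]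

theorem HasBoxExponent.image {f : α → β} {L : ℝ≥0} (hf : LipschitzWith L f) {A : Set α} {s : ℝ≥0}
    (hA : HasBoxExponent A s) : HasBoxExponent (f '' A) s := by
  classical
  obtain ⟨C, hC⟩ := hA
  refine .of_ball_mul (b := L + 1) (C := C) (by positivity) ?_
  filter_upwards [hC, self_mem_nhdsWithin] with ε ⟨T, hT, hcard⟩ hε
  refine ⟨T.image f, ?_, le_trans (mod_cast Finset.card_image_le) hcard⟩
  rintro _ ⟨a, ha, rfl⟩
  obtain ⟨x, hx, hax⟩ := mem_iUnion₂.1 (hT ha)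
  refine mem_iUnion₂.2 ⟨f x, Finset.mem_image_of_mem f hx, ?_⟩
  calc dist (f a) (f x) ≤ L * dist a x := hf.dist_le_mul a x
    _ ≤ L * ε := by gcongr; exact (Metric.mem_ball.1 hax).le
    _ < (L + 1) * ε := mul_lt_mul_of_pos_right (lt_add_one _) hε

theorem HasBoxExponent.prod {A : Set α} {B : Set β} {s t : ℝ≥0} (hA : HasBoxExponent A s)
    (hB : HasBoxExponent B t) : HasBoxExponent (A ×ˢ B) (s + t) := by
  obtain ⟨C, hC⟩ := hA
  obtain ⟨C', hC'⟩ := hB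
  refine ⟨C * C', ?_⟩
  filter_upwards [hC, hC', self_mem_nhdsWithin] with ε ⟨T, hT, hcard⟩ ⟨T', hT', hcard'⟩ hε
  refine ⟨T ×ˢ T', ?_, ?_⟩
  · rintro ⟨a, b⟩ ⟨ha, hb⟩
    obtain ⟨x, hx, hax⟩ := mem_iUnion₂.1 (hT ha)
    obtain ⟨y, hy, hby⟩ := mem_iUnion₂.1 (hT' hb)
    refine mem_iUnion₂.2 ⟨(x, y), Finset.mk_mem_product hx hy, ?_⟩
    rw [← ball_prod_same]
    exact ⟨hax, hby⟩
  · calc ((T ×ˢ T').card : ℝ) = T.card * T'.card := by rw [Finset.card_product, Nat.cast_mul]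
      _ ≤ (C * ε ^ (-s : ℝ)) * (C' * ε ^ (-t : ℝ)) := by
        gcongr
        exact (Nat.cast_nonneg _).trans hcard
      _ = C * C' * ε ^ (-(s + t : ℝ≥0) : ℝ) := by
        rw [NNReal.coe_add, neg_add, Real.rpow_add hε]
        ring

theorem HasBoxExponent.pi {ι : Type*} [Fintype ι] {X : ι → Type*} [∀ i, PseudoMetricSpace (X i)]
    {A : ∀ i, Set (X i)} {s : ι → ℝ≥0} (hA : ∀ i, HasBoxExponent (A i) (s i)) :
    HasBoxExponent (univ.pi A) (∑ i, s i) := by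
  classical
  choose C hC using hA
  refine ⟨∏ i, C i, ?_⟩
  filter_upwards [eventually_all.2 hC, self_mem_nhdsWithin] with ε hT hε
  choose T hT hcard using hT
  refine ⟨Fintype.piFinset T, fun a ha => ?_, ?_⟩
  · choose x hx hax using fun i => mem_iUnion₂.1 (hT i (ha i (mem_univ i)))
    exact mem_iUnion₂.2 ⟨x, Fintype.mem_piFinset.2 hx, (dist_pi_lt_iff hε).2 hax⟩
  · calc ((Fintype.piFinset T).card : ℝ) = ∏ i, ((T i).card : ℝ) := by
          rw [Fintype.card_piFinset, Nat.cast_prod]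
      _ ≤ ∏ i, C i * ε ^ (-s i : ℝ) :=
        Finset.prod_le_prod (fun i _ => Nat.cast_nonneg _) fun i _ => hcard i
      _ = (∏ i, C i) * ε ^ (-(∑ i, s i : ℝ≥0) : ℝ) := by
        rw [Finset.prod_mul_distrib, NNReal.coe_sum, ← Finset.sum_neg_distrib,
          Real.rpow_sum_of_pos hε]

theorem HasBoxExponent.sub {E : Type*} [SeminormedAddCommGroup E] {A B : Set E} {s t : ℝ≥0}
    (hA : HasBoxExponent A s) (hB : HasBoxExponent B t) : HasBoxExponent (A - B) (s + t) := by
  rw [← sub_image_prod]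
  exact (hA.prod hB).image (LipschitzWith.prod_fst.sub LipschitzWith.prod_snd)

theorem hasBoxExponent_Icc (a b : ℝ) : HasBoxExponent (Icc a b) 1 := by
  refine ⟨|b - a| + 1, ?_⟩
  filter_upwards [Ioc_mem_nhdsGT one_pos] with ε ⟨hε, hε1⟩
  refine ⟨(Finset.range (⌊|b - a| / ε⌋₊ + 1)).image fun k : ℕ => a + k * ε, fun x hx => ?_, ?_⟩
  · have hk0 : 0 ≤ (x - a) / ε := div_nonneg (sub_nonneg.2 hx.1) hε.le
    have hk := (le_div_iff₀ hε).1 (Nat.floor_le hk0)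
    have hk' := (div_lt_iff₀ hε).1 (Nat.lt_floor_add_one ((x - a) / ε))
    refine mem_iUnion₂.2 ⟨a + ⌊(x - a) / ε⌋₊ * ε, Finset.mem_image_of_mem _ ?_, ?_⟩
    · rw [Finset.mem_range, Nat.lt_succ_iff]
      gcongr
      exact (sub_le_sub_right hx.2 a).trans (le_abs_self _)
    · rw [Metric.mem_ball, Real.dist_eq, abs_lt]
      constructor <;> linarith
  · calc (((Finset.range (⌊|b - a| / ε⌋₊ + 1)).image fun k : ℕ => a + k * ε).card : ℝ)
        ≤ ⌊|b - a| / ε⌋₊ + 1 := by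
          exact_mod_cast Finset.card_image_le.trans_eq (Finset.card_range _)
      _ ≤ |b - a| / ε + 1 / ε := by
          gcongr
          · exact Nat.floor_le (by positivity)
          · exact (one_le_div hε).2 hε1
      _ = (|b - a| + 1) * ε ^ (-(1 : ℝ≥0) : ℝ) := by
          rw [NNReal.coe_one, Real.rpow_neg_one, ← add_div, div_eq_mul_inv]

theorem hasBoxExponent_of_isBounded {E : Type*} [NormedAddCommGroup E] [NormedSpace ℝ E]
    [FiniteDimensional ℝ E] {B : Set E} (hB : Bornology.IsBounded B) :
    HasBoxExponent B (finrank ℝ E) := by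
  let e : E ≃L[ℝ] (Fin (finrank ℝ E) → ℝ) := .ofFinrankEq (finrank_fin_fun ℝ).symm
  obtain ⟨R, hR⟩ := (e.lipschitz.isBounded_image hB).subset_closedBall 0
  have hcube : HasBoxExponent (univ.pi fun _ : Fin (finrank ℝ E) => Icc (-R) R)
      (finrank ℝ E) := by
    simpa using HasBoxExponent.pi fun _ : Fin (finrank ℝ E) => hasBoxExponent_Icc (-R) R
  refine (hcube.image e.symm.lipschitz).mono fun x hx => ⟨e x, fun i _ => ?_, e.symm_apply_apply x⟩
  have hx : ‖e x‖ ≤ R := mem_closedBall_zero_iff.1 (hR (mem_image_of_mem e hx))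
  exact abs_le.1 ((norm_le_pi_norm (e x) i).trans hx)

end BoxExponent

section Haar

variable {E : Type*} [NormedAddCommGroup E] [NormedSpace ℝ E] [FiniteDimensional ℝ E]
  [MeasurableSpace E] [BorelSpace E] (μ : Measure E) [μ.IsAddHaarMeasure]

theorem HasBoxExponent.addHaar_closure_eq_zero {A : Set E} {s : ℝ≥0} (hA : HasBoxExponent A s)
    (hs : s < finrank ℝ E) : μ (closure A) = 0 := by
  obtain ⟨C, hC⟩ := hA
  set d := finrank ℝ E
  have hbound : ∀ᶠ ε : ℝ in 𝓝[>] 0,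
      μ (closure A) ≤ ENNReal.ofReal (C * ε ^ (d - s : ℝ)) * μ (Metric.ball 0 1) := by
    filter_upwards [hC, self_mem_nhdsWithin] with ε ⟨T, hT, hcard⟩ hε
    have hcover : closure A ⊆ ⋃ x ∈ T, Metric.closedBall x ε :=
      closure_minimal (hT.trans (iUnion₂_mono fun x _ => Metric.ball_subset_closedBall))
        (T.finite_toSet.isClosed_biUnion fun x _ => Metric.isClosed_closedBall)
    calc μ (closure A) ≤ ∑ x ∈ T, μ (Metric.closedBall x ε) :=
          (measure_mono hcover).trans (measure_biUnion_finset_le _ _)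
      _ = ENNReal.ofReal (T.card * ε ^ d) * μ (Metric.ball 0 1) := by
        simp only [Measure.addHaar_closedBall μ _ (le_of_lt hε), Finset.sum_const, nsmul_eq_mul]
        rw [ENNReal.ofReal_mul (Nat.cast_nonneg _), ENNReal.ofReal_natCast, mul_assoc]
      _ ≤ ENNReal.ofReal (C * ε ^ (-s : ℝ) * ε ^ (d : ℝ)) * μ (Metric.ball 0 1) := by
        rw [Real.rpow_natCast]
        gcongr
        exact pow_nonneg (le_of_lt hε) _
      _ = ENNReal.ofReal (C * ε ^ (d - s : ℝ)) * μ (Metric.ball 0 1) := by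
        rw [mul_assoc, ← Real.rpow_add hε, neg_add_eq_sub]
  have hpos : 0 < (d - s : ℝ) := sub_pos.2 (mod_cast hs)
  have hreal : Tendsto (fun ε : ℝ => C * ε ^ (d - s : ℝ)) (𝓝[>] 0) (𝓝 0) := by
    have h := ((Real.continuous_rpow_const hpos.le).const_mul C).tendsto' 0 0
      (by simp [Real.zero_rpow hpos.ne'])
    exact h.mono_left nhdsWithin_le_nhds
  have hlim := ENNReal.Tendsto.mul_const (b := μ (Metric.ball 0 1)) (ENNReal.tendsto_ofReal hreal)
    (.inr measure_ball_lt_top.ne)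
  rw [ENNReal.ofReal_zero, zero_mul] at hlim
  exact le_antisymm (ge_of_tendsto hlim hbound) zero_le

end Haar

section PackingDim

variable {α : Type*} [PseudoMetricSpace α]

theorem hasBoxExponent_of_ubDim_lt {A : Set α} {s : ℝ≥0} (h : ubDim A < s) :
    HasBoxExponent A s := by
  refine ⟨1, ?_⟩
  filter_upwards [eventually_lt_of_limsup_lt h, Ioo_mem_nhdsGT one_pos] with ε hlt ⟨hε, hε1⟩
  split_ifs at hlt with htop
  · exact absurd hlt not_top_lt
  rw [← ENNReal.ofReal_coe_nnreal] at hlt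
  have hlog : 0 < Real.log ε⁻¹ := Real.log_pos ((one_lt_inv₀ hε).2 hε1)
  have hreal : (coverN A ε).toReal < ε ^ (-s : ℝ) :=
    calc (coverN A ε).toReal ≤ Real.exp (Real.log (coverN A ε).toReal) := Real.le_exp_log _
      _ < Real.exp (s * Real.log ε⁻¹) :=
        Real.exp_lt_exp.2 ((div_lt_iff₀ hlog).1 (ENNReal.ofReal_lt_ofReal_iff'.1 hlt).1)
      _ = ε ^ (-s : ℝ) := by
        rw [Real.rpow_def_of_pos hε, Real.log_inv, mul_neg, mul_neg, mul_comm]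
  obtain ⟨T, hT, hcard⟩ := by
    simpa only [coverN, iInf_lt_iff] using (ENNReal.lt_ofReal_iff_toReal_lt htop).2 hreal
  rw [← ENNReal.ofReal_natCast] at hcard
  exact ⟨T, hT, (one_mul (ε ^ (-s : ℝ))).symm ▸ (ENNReal.ofReal_lt_ofReal_iff'.1 hcard).1.le⟩

theorem HasBoxExponent.eventually_coverN_le {A : Set α} {s t : ℝ≥0} (hA : HasBoxExponent A s)
    (hst : s < t) : ∀ᶠ ε : ℝ in 𝓝[>] 0, coverN A ε ≤ ENNReal.ofReal (ε ^ (-t : ℝ)) := by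
  obtain ⟨C, hC⟩ := hA
  have hpos : 0 < (t - s : ℝ) := sub_pos.2 hst
  have hsmall : ∀ᶠ ε : ℝ in 𝓝[>] 0, C * ε ^ (t - s : ℝ) ≤ 1 := by
    have h := ((Real.continuous_rpow_const hpos.le).const_mul C).tendsto' 0 0
      (by simp [Real.zero_rpow hpos.ne'])
    exact (h.eventually_le_const one_pos).filter_mono nhdsWithin_le_nhds
  filter_upwards [hC, hsmall, self_mem_nhdsWithin] with ε ⟨T, hT, hcard⟩ hε1 hε
  have hreal : (T.card : ℝ) ≤ ε ^ (-t : ℝ) :=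
    calc (T.card : ℝ) ≤ C * ε ^ (-s : ℝ) := hcard
      _ = C * ε ^ (t - s : ℝ) * ε ^ (-t : ℝ) := by
        rw [mul_assoc, ← Real.rpow_add hε]
        ring_nf
      _ ≤ ε ^ (-t : ℝ) := mul_le_of_le_one_left (Real.rpow_nonneg (le_of_lt hε) _) hε1
  calc coverN A ε ≤ T.card := iInf₂_le T hT
    _ = ENNReal.ofReal T.card := (ENNReal.ofReal_natCast _).symm
    _ ≤ ENNReal.ofReal (ε ^ (-t : ℝ)) := ENNReal.ofReal_le_ofReal hreal

theorem HasBoxExponent.ubDim_le {A : Set α} {s : ℝ≥0} (hA : HasBoxExponent A s) :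
    ubDim A ≤ s := by
  refine ENNReal.le_of_forall_pos_le_add fun δ hδ _ => limsup_le_of_le (by isBoundedDefault) ?_
  filter_upwards [hA.eventually_coverN_le (lt_add_of_pos_right s hδ),
    Ioo_mem_nhdsGT one_pos] with ε hN ⟨hε, hε1⟩
  rw [if_neg (hN.trans_lt ENNReal.ofReal_lt_top).ne, ← ENNReal.coe_add,
    ← ENNReal.ofReal_coe_nnreal]
  have hlog : 0 < Real.log ε⁻¹ := Real.log_pos ((one_lt_inv₀ hε).2 hε1)
  refine ENNReal.ofReal_le_ofReal ((div_le_iff₀ hlog).2 ?_)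
  rcases ENNReal.toReal_nonneg.eq_or_lt' with h0 | h0
  · rw [h0, Real.log_zero]
    positivity
  · calc Real.log (coverN A ε).toReal ≤ Real.log (ε ^ (-(s + δ : ℝ≥0) : ℝ)) :=
          Real.log_le_log h0 (ENNReal.toReal_le_of_le_ofReal (Real.rpow_nonneg hε.le _) hN)
      _ = (s + δ : ℝ≥0) * Real.log ε⁻¹ := by
        rw [Real.log_rpow hε, Real.log_inv, neg_mul_comm]

theorem exists_hasBoxExponent_of_packingDim_lt {A : Set α} {s : ℝ≥0} (h : packingDim A < s) :
    ∃ B : ℕ → Set α, A ⊆ ⋃ n, B n ∧ ∀ n, HasBoxExponent (B n) s := by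
  obtain ⟨B, hAB, hB⟩ := by simpa only [packingDim, iInf_lt_iff] using h
  exact ⟨B, hAB, fun n =>
    hasBoxExponent_of_ubDim_lt ((le_iSup (fun n => ubDim (B n)) n).trans_lt hB)⟩

theorem packingDim_le_of_hasBoxExponent {ι : Type*} [Countable ι] [Nonempty ι] {A : Set α}
    {s : ℝ≥0} {B : ι → Set α} (hAB : A ⊆ ⋃ i, B i) (hB : ∀ i, HasBoxExponent (B i) s) :
    packingDim A ≤ s := by
  obtain ⟨e, he⟩ := exists_surjective_nat ι
  exact iInf₂_le_of_le (B ∘ e) (hAB.trans (he.iUnion_comp B).superset)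
    (iSup_le fun n => (hB (e n)).ubDim_le)

theorem packingDim_sub_le {E : Type*} [SeminormedAddCommGroup E] (A B : Set E) :
    packingDim (A - B) ≤ packingDim A + packingDim B := by
  refine ENNReal.le_of_forall_pos_le_add fun δ hδ hfin => ?_
  obtain ⟨hAfin, hBfin⟩ := ENNReal.add_lt_top.1 hfin
  have hδ2 : (δ / 2 : ℝ≥0∞) ≠ 0 := (ENNReal.half_pos (ENNReal.coe_ne_zero.2 hδ.ne')).ne'
  obtain ⟨a, ha, ha'⟩ :=
    ENNReal.lt_iff_exists_nnreal_btwn.1 (ENNReal.lt_add_right hAfin.ne hδ2)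
  obtain ⟨b, hb, hb'⟩ :=
    ENNReal.lt_iff_exists_nnreal_btwn.1 (ENNReal.lt_add_right hBfin.ne hδ2)
  obtain ⟨A', hA, hA'⟩ := exists_hasBoxExponent_of_packingDim_lt ha
  obtain ⟨B', hB, hB'⟩ := exists_hasBoxExponent_of_packingDim_lt hb
  have hcover : A - B ⊆ ⋃ p : ℕ × ℕ, (A' p.1 - B' p.2) := by
    rintro _ ⟨x, hx, y, hy, rfl⟩
    obtain ⟨m, hm⟩ := mem_iUnion.1 (hA hx)
    obtain ⟨n, hn⟩ := mem_iUnion.1 (hB hy)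
    exact mem_iUnion.2 ⟨(m, n), sub_mem_sub hm hn⟩
  calc packingDim (A - B) ≤ (a + b : ℝ≥0) :=
        packingDim_le_of_hasBoxExponent hcover fun p => (hA' p.1).sub (hB' p.2)
    _ ≤ (packingDim A + δ / 2) + (packingDim B + δ / 2) := by
      rw [ENNReal.coe_add]
      gcongr
    _ = packingDim A + packingDim B + δ := by
      rw [add_add_add_comm, ENNReal.add_halves]

end PackingDim

section Mycielski

variable {J κ Y : Type*}

theorem isOpenMap_comp_right [TopologicalSpace Y] {σ : J → κ} (hσ : Function.Injective σ) :
    IsOpenMap fun z : κ → Y => z ∘ σ := by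
  refine .of_sections fun z => ⟨fun w => Function.extend σ w z, ?_, ?_, ?_⟩
  · refine continuousAt_pi.2 fun b => ?_
    by_cases hb : ∃ a, σ a = b
    · obtain ⟨a, rfl⟩ := hb
      simpa only [hσ.extend_apply] using continuousAt_apply a _
    · simpa only [Function.extend_apply' _ _ _ hb] using continuousAt_const
  · refine funext fun b => ?_
    by_cases hb : ∃ a, σ a = b
    · obtain ⟨a, rfl⟩ := hb
      exact hσ.extend_apply _ _ a
    · exact Function.extend_apply' _ _ _ hb
  · exact fun w => Function.extend_comp hσ w z

theorem dense_setOfPred_forall_injective_comp_mem [Finite J] [Finite κ] [TopologicalSpace Y]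
    [BaireSpace (κ → Y)] {U : Set (J → Y)} (hUo : IsOpen U) (hUd : Dense U) :
    Dense {z : κ → Y | ∀ σ : J → κ, Function.Injective σ → z ∘ σ ∈ U} := by
  have hcomp : Dense (⋂ σ : {σ : J → κ // Function.Injective σ},
      (fun z : κ → Y => z ∘ σ.1) ⁻¹' U) :=
    dense_iInter_of_isOpen (fun σ => hUo.preimage (by fun_prop))
      fun σ => hUd.preimage (isOpenMap_comp_right σ.2)
  exact hcomp.mono fun z hz σ hσ => mem_iInter.1 hz ⟨σ, hσ⟩

/-- The `J`-tuples of binary sequences whose prefixes of length `k` are pairwise distinct. For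
finite `J` these compact sets exhaust the injective tuples. -/
def prefixDistinct (J : Type*) (k : ℕ) : Set (J → ℕ → Bool) :=
  {σ | Function.Injective fun j (a : Fin k) => σ j a}

theorem isCompact_prefixDistinct [Finite J] (k : ℕ) : IsCompact (prefixDistinct J k) := by
  have hprefix : Continuous fun (σ : J → ℕ → Bool) j (a : Fin k) => σ j a := by fun_prop
  exact ((isClosed_discrete {τ : J → Fin k → Bool | Function.Injective τ}).preimage
    hprefix).isCompact

theorem exists_mem_prefixDistinct [Finite J] {σ : J → ℕ → Bool} (hσ : Function.Injective σ) :
    ∃ k, σ ∈ prefixDistinct J k := by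
  have hpair : ∀ᶠ k : ℕ in atTop, ∀ j j', (∀ a : Fin k, σ j a = σ j' a) → j = j' := by
    refine eventually_all.2 fun j => eventually_all.2 fun j' => ?_
    by_cases h : σ j = σ j'
    · exact Eventually.of_forall fun _ _ => hσ h
    · obtain ⟨a, ha⟩ := Function.ne_iff.1 h
      filter_upwards [eventually_gt_atTop a] with k hk heq
      exact absurd (heq ⟨a, hk⟩) ha
  obtain ⟨k, hk⟩ := hpair.exists
  exact ⟨k, fun j j' h => hk j j' (congrFun h)⟩

theorem exists_forall_mem_cylinder_dist_lt [PseudoMetricSpace Y] {f : (ℕ → Bool) → Y}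
    (hf : Continuous f) {ε : ℝ} (hε : 0 < ε) :
    ∃ m : ℕ, ∀ x, ∀ y ∈ PiNat.cylinder x m, dist (f y) (f x) < ε := by
  let _ : MetricSpace (ℕ → Bool) := PiNat.metricSpaceOfDiscreteUniformity fun _ => rfl
  obtain ⟨δ, hδ, h⟩ := Metric.uniformContinuous_iff.1
    (CompactSpace.uniformContinuous_of_continuous hf) ε hε
  obtain ⟨m, hm⟩ := exists_pow_lt_of_lt_one hδ one_half_lt_one
  exact ⟨m, fun x y hxy => h ((PiNat.mem_cylinder_iff_dist_le.1 hxy).trans_lt hm)⟩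

theorem exists_prefix_dist_lt [PseudoMetricSpace Y] {f : (ℕ → Bool) → Y} (hf : Continuous f)
    (k : ℕ) {ε : ℝ} (hε : 0 < ε) :
    ∃ m ≥ k, ∃ y : (Fin m → Bool) → Y, ∀ x, dist (y fun i => x i) (f x) < ε := by
  obtain ⟨m, hm⟩ := exists_forall_mem_cylinder_dist_lt hf hε
  refine ⟨max k m, le_max_left k m,
    fun s => f fun a => if h : a < max k m then s ⟨a, h⟩ else false, fun x => hm _ _ ?_⟩
  exact PiNat.mem_cylinder_iff.2 fun a ha => dif_pos (ha.trans_le (le_max_right k m))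

theorem isOpen_setOfPred_mapsTo_prefixDistinct [Finite J] [TopologicalSpace Y] {U : Set (J → Y)}
    (hU : IsOpen U) (k : ℕ) :
    IsOpen {f : C(ℕ → Bool, Y) | MapsTo (fun σ => f ∘ σ) (prefixDistinct J k) U} := by
  let Φ : C(ℕ → Bool, Y) → C(J → ℕ → Bool, J → Y) := fun f => ⟨fun σ => f ∘ σ, by fun_prop⟩
  have hΦ : Continuous Φ := by
    apply ContinuousMap.continuous_of_continuous_uncurry
    simp only [Function.uncurry_def, Φ, ContinuousMap.coe_mk, Function.comp_def]
    fun_prop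
  exact (ContinuousMap.isOpen_setOfPred_mapsTo (isCompact_prefixDistinct k) hU).preimage hΦ

theorem dense_setOfPred_mapsTo_prefixDistinct [Finite J] [PseudoMetricSpace Y] [CompleteSpace Y]
    {U : Set (J → Y)} (hUo : IsOpen U) (hUd : Dense U) (k : ℕ) :
    Dense {f : C(ℕ → Bool, Y) | MapsTo (fun σ => f ∘ σ) (prefixDistinct J k) U} := by
  refine Metric.dense_iff.2 fun f r hr => ?_
  have hr3 : 0 < r / 3 := by positivity
  obtain ⟨m, hkm, y, hy⟩ := exists_prefix_dist_lt f.continuous k hr3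
  obtain ⟨z, hz, hzy⟩ :=
    (dense_setOfPred_forall_injective_comp_mem (κ := Fin m → Bool) hUo hUd).exists_dist_lt y hr3
  let g : C(ℕ → Bool, Y) :=
    ⟨fun c => z fun i => c i, (continuous_of_discreteTopology (f := z)).comp (by fun_prop)⟩
  have hg : ∀ c, dist (g c) (f c) ≤ r / 3 + r / 3 := fun c =>
    (dist_triangle _ (y fun i => c i) _).trans
      (add_le_add ((dist_comm _ _).trans_le ((dist_le_pi_dist y z _).trans hzy.le)) (hy c).le)
  refine ⟨g, ?_, fun σ hσ => ?_⟩
  · exact ((ContinuousMap.dist_le (by positivity)).2 hg).trans_lt (by linarith)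
  · refine hz (fun j i => σ j i) fun j j' h => hσ (funext fun a => ?_)
    exact congrFun h (a.castLE hkm)

/-- **Mycielski's theorem**, by a Baire category argument in `C(ℕ → Bool, Y)`. -/
theorem exists_continuousMap_forall_injective_comp_mem [Finite J] [PseudoMetricSpace Y]
    [CompleteSpace Y] [Nonempty Y] {G : Set (J → Y)} (hG : G ∈ residual (J → Y)) :
    ∃ f : C(ℕ → Bool, Y), ∀ σ : J → ℕ → Bool, Function.Injective σ → f ∘ σ ∈ G := by
  obtain ⟨S, hSo, hSd, hSc, hSG⟩ := mem_residual_iff.1 hG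
  have := hSc.to_subtype
  have : Nonempty C(ℕ → Bool, Y) := .map (.const _) ‹Nonempty Y›
  have hdense : Dense (⋂ p : S × ℕ,
      {f : C(ℕ → Bool, Y) | MapsTo (fun σ => f ∘ σ) (prefixDistinct J p.2) p.1}) :=
    dense_iInter_of_isOpen
      (fun p => isOpen_setOfPred_mapsTo_prefixDistinct (hSo _ p.1.2) p.2)
      fun p => dense_setOfPred_mapsTo_prefixDistinct (hSo _ p.1.2) (hSd _ p.1.2) p.2
  obtain ⟨f, hf⟩ := hdense.nonempty
  refine ⟨f, fun σ hσ => hSG fun U hU => ?_⟩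
  obtain ⟨k, hk⟩ := exists_mem_prefixDistinct hσ
  exact mem_iInter.1 hf (⟨U, hU⟩, k) hk

end Mycielski

section Measure

variable {J ι X : Type*}

theorem exists_continuousMap_forall_injective_comp_notMem [Fintype J] [Countable ι]
    [PseudoMetricSpace X] [CompleteSpace X] [Nonempty X] [MeasurableSpace X] (ν : Measure X)
    [ν.IsOpenPosMeasure] [SigmaFinite ν]
    {Z : ι → Set (J → X)} (hZc : ∀ i, IsClosed (Z i))
    (hZ : ∀ i, Measure.pi (fun _ : J => ν) (Z i) = 0) :
    ∃ f : C(ℕ → Bool, X), ∀ σ : J → ℕ → Bool, Function.Injective σ → ∀ i, f ∘ σ ∉ Z i := by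
  have hres : ⋂ i, (Z i)ᶜ ∈ residual (J → X) := countable_iInter_mem.2 fun i =>
    residual_of_dense_open (hZc i).isOpen_compl
      (Measure.dense_of_ae (compl_mem_ae_iff.2 (hZ i)))
  obtain ⟨f, hf⟩ := exists_continuousMap_forall_injective_comp_mem hres
  exact ⟨f, fun σ hσ => mem_iInter.1 (hf σ hσ)⟩

theorem isOpenPosMeasure_comap_support [TopologicalSpace X] [HereditarilyLindelofSpace X]
    [MeasurableSpace X] [OpensMeasurableSpace X] (ν : Measure X) :
    (ν.comap ((↑) : ν.support → X)).IsOpenPosMeasure := by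
  refine ⟨?_⟩
  rintro _ ⟨V, hV, rfl⟩ ⟨x, hx⟩
  rw [comap_subtype_coe_apply Measure.isClosed_support.measurableSet,
    Subtype.image_preimage_coe, inter_comm, measure_inter_conull Measure.support_mem_ae]
  exact ((Measure.mem_support_iff_forall x.1).1 x.2 V (hV.mem_nhds hx)).ne'

theorem exists_forall_mem_injective_comp_notMem [Fintype J] [Countable ι]
    [PseudoMetricSpace X] [CompleteSpace X] [SecondCountableTopology X]
    [MeasurableSpace X] [BorelSpace X] {ν : Measure X} [IsFiniteMeasure ν] (hν : ν ≠ 0)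
    {Z : ι → Set (J → X)} (hZc : ∀ i, IsClosed (Z i))
    (hZ : ∀ i, Measure.pi (fun _ : J => ν) (Z i) = 0) :
    ∃ f : (ℕ → Bool) → X, (∀ c, f c ∈ ν.support) ∧
      ∀ σ : J → ℕ → Bool, Function.Injective σ → ∀ i, f ∘ σ ∉ Z i := by
  have hclosed : IsClosed ν.support := Measure.isClosed_support
  have := hclosed.completeSpace_coe
  have := (Measure.nonempty_support hν).to_subtype
  have := isOpenPosMeasure_comap_support ν
  have hpres : MeasurePreserving (fun (z : J → ν.support) j => (z j : X))
      (Measure.pi fun _ => ν.comap ((↑) : ν.support → X)) (Measure.pi fun _ => ν) := by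
    have h := measurePreserving_subtype_coe (μa := ν) hclosed.measurableSet
    rw [Measure.restrict_eq_self_of_ae_mem (s := ν.support) Measure.support_mem_ae] at h
    exact measurePreserving_pi _ _ fun _ => h
  obtain ⟨f, hf⟩ := exists_continuousMap_forall_injective_comp_notMem
    (ν.comap ((↑) : ν.support → X))
    (Z := fun i => (fun z j => (z j : X)) ⁻¹' Z i) (fun i => (hZc i).preimage (by fun_prop))
    fun i => (hpres.measure_preimage (hZc i).measurableSet.nullMeasurableSet).trans (hZ i)
  exact ⟨fun c => f c, fun c => (f c).2, fun σ hσ i => hf σ hσ i⟩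

theorem exists_forall_mem_injective_comp_notMem_of_measure_pos [Fintype J] [Countable ι]
    [MetricSpace X] [CompleteSpace X] [SecondCountableTopology X]
    [MeasurableSpace X] [BorelSpace X] {μ : Measure X} [SigmaFinite μ]
    [IsFiniteMeasureOnCompacts μ] [μ.InnerRegular]
    {B : Set X} (hB : MeasurableSet B) (hpos : 0 < μ B)
    {Z : ι → Set (J → X)} (hZc : ∀ i, IsClosed (Z i))
    (hZ : ∀ i, Measure.pi (fun _ : J => μ) (Z i) = 0) :
    ∃ f : (ℕ → Bool) → X, (∀ c, f c ∈ B) ∧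
      ∀ σ : J → ℕ → Bool, Function.Injective σ → ∀ i, f ∘ σ ∉ Z i := by
  obtain ⟨C, hCB, hC, hCpos⟩ := hB.exists_lt_isCompact hpos
  have := isFiniteMeasure_restrict (μ := μ).2 hC.measure_lt_top.ne
  have hsupp : (μ.restrict C).support ⊆ C :=
    Measure.support_subset_of_isClosed hC.isClosed (ae_restrict_mem hC.measurableSet)
  have hpi : Measure.pi (fun _ : J => μ.restrict C) ≤ Measure.pi fun _ => μ := by
    rw [← Measure.restrict_pi_pi]
    exact Measure.restrict_le_self
  obtain ⟨f, hfC, hf⟩ := exists_forall_mem_injective_comp_notMem (ν := μ.restrict C)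
    (fun h => hCpos.ne' (Measure.restrict_eq_zero.1 h)) hZc
    fun i => le_antisymm ((hpi _).trans_eq (hZ i)) zero_le
  exact ⟨f, fun c => hCB (hsupp (hfC c)), hf⟩

end Measure

section Cardinality

open Cardinal

universe u v

theorem exists_forall_notMem_of_countable {ι : Type u} {α : Type v} (hα : ℵ₀ < #α)
    (hι : lift.{v} #ι < lift.{u} #α) {A : ι → Set α} (hA : ∀ i, (A i).Countable) :
    ∃ a, ∀ i, a ∉ A i := by
  by_contra! hcover
  have hle : lift.{u} #α ≤ lift.{v} #ι * ℵ₀ :=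
    calc lift.{u} #α = lift.{u} #(⋃ i, A i) := by
          rw [iUnion_eq_univ_iff.2 hcover, mk_univ]
      _ ≤ lift.{v} #ι * ⨆ i, lift.{u} #(A i) := mk_iUnion_le_lift A
      _ ≤ lift.{v} #ι * ℵ₀ := by
        gcongr
        exact ciSup_le' fun i => lift_le_aleph0.2 (hA i).le_aleph0
  refine (mul_lt_of_lt ?_ hι ?_).not_ge hle
  · exact aleph0_le_lift.2 hα.le
  · exact aleph0_lt_lift.2 hα

variable {α : Type*} {r : α → α → Prop}

theorem exists_pairwise_forall_inter_nonempty [Std.Symm r] {𝓑 : Set (Set α)}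
    (h : ∀ B ∈ 𝓑, ∀ S : Set α, #S < #𝓑 → ∃ x ∈ B, ∀ y ∈ S, r x y) :
    ∃ X : Set α, X.Pairwise r ∧ ∀ B ∈ 𝓑, (X ∩ B).Nonempty := by
  obtain ⟨e⟩ := Cardinal.eq.1 (mk_ord_toType #𝓑)
  have hstep : ∀ (i : (#𝓑).ord.ToType) (x : Iio i → α), ∃ y ∈ (e i).1, ∀ j, r y (x j) := by
    intro i x
    obtain ⟨y, hy, hyx⟩ := h _ (e i).2 (range x)
      (mk_range_le.trans_lt ((mk_Iio_lt i (by simp)).trans_eq (mk_ord_toType _)))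
    exact ⟨y, hy, fun j => hyx _ (mem_range_self j)⟩
  choose F hFmem hF using hstep
  let x : (#𝓑).ord.ToType → α := WellFoundedLT.fix fun i ih => F i fun j => ih j j.2
  have hx : ∀ i, x i = F i fun j => x j := fun i => WellFoundedLT.fix_eq _ i
  have hlt : ∀ i j, j < i → r (x i) (x j) := fun i j hji => by
    rw [hx i]
    exact hF i (fun j => x j) ⟨j, hji⟩
  refine ⟨range x, ?_, fun B hB => ⟨x (e.symm ⟨B, hB⟩), mem_range_self _, ?_⟩⟩
  · rintro _ ⟨i, rfl⟩ _ ⟨j, rfl⟩ hne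
    rcases lt_trichotomy i j with hij | rfl | hij
    · exact symm (hlt j i hij)
    · exact absurd rfl hne
    · exact hlt i j hij
  · rw [hx]
    simpa only [e.apply_symm_apply] using hFmem (e.symm ⟨B, hB⟩) fun j => x j

variable [MeasurableSpace α] [MeasurableSpace.CountablyGenerated α]

theorem mk_measurableSet_le_continuum : #{B : Set α | MeasurableSet B} ≤ 𝔠 := by
  have h := MeasurableSpace.cardinal_measurableSet_le_continuum
    ((MeasurableSpace.countable_countableGeneratingSet (α := α)).le_aleph0.trans
      aleph0_le_continuum)
  rwa [MeasurableSpace.generateFrom_countableGeneratingSet] at h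

theorem exists_measure_pos_pairwise (μ : Measure α) [NeZero μ] [Std.Symm r]
    (h : ∀ B, MeasurableSet B → 0 < μ B → ∀ S : Set α, #S < 𝔠 → ∃ x ∈ B, ∀ y ∈ S, r x y) :
    ∃ X : Set α, 0 < μ X ∧ X.Pairwise r := by
  have hcard : #{B | MeasurableSet B ∧ 0 < μ B} ≤ 𝔠 :=
    (mk_subtype_mono fun B hB => hB.1).trans mk_measurableSet_le_continuum
  obtain ⟨X, hXr, hX⟩ := exists_pairwise_forall_inter_nonempty (r := r)
    (𝓑 := {B | MeasurableSet B ∧ 0 < μ B})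
    fun B hB S hS => h B hB.1 hB.2 S (hS.trans_le hcard)
  refine ⟨X, pos_iff_ne_zero.2 fun hX0 => ?_, hXr⟩
  have hconull : 0 < μ (toMeasurable μ X)ᶜ := by
    rw [measure_compl (measurableSet_toMeasurable μ X) (by simp [hX0]), measure_toMeasurable, hX0,
      tsub_zero]
    exact Measure.measure_univ_pos.2 (NeZero.ne μ)
  obtain ⟨x, hxX, hx⟩ := hX _ ⟨(measurableSet_toMeasurable μ X).compl, hconull⟩
  exact hx (subset_toMeasurable μ X hxX)

end Cardinality

theorem exists_nat_mul_add_lt_nat_mul {s d : ℝ≥0} (hs : s < d) (r : ℝ≥0) :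
    ∃ n : ℕ, n * s + r < n * d := by
  obtain ⟨n, hn⟩ := exists_nat_gt (r / (d - s))
  refine ⟨n, ?_⟩
  calc n * s + r < n * s + n * (d - s) := by
        gcongr
        exact (div_lt_iff₀ (tsub_pos_of_lt hs)).1 hn
    _ = n * d := by rw [← mul_add, add_tsub_cancel_of_le hs.le]

section AddHaar

open Cardinal

variable {E : Type*} [NormedAddCommGroup E] [NormedSpace ℝ E] [FiniteDimensional ℝ E]
  [MeasurableSpace E] [BorelSpace E] (μ : Measure E) [μ.IsAddHaarMeasure]

theorem HasBoxExponent.pi_closure_pi_sub_const_eq_zero {A B : Set E} {s : ℝ≥0}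
    (hA : HasBoxExponent A s) (hB : Bornology.IsBounded B) {n : ℕ}
    (hn : n * s + finrank ℝ E < n * finrank ℝ E) :
    Measure.pi (fun _ : Fin n => μ)
      (closure (univ.pi (fun _ => A) - Function.const (Fin n) '' B)) = 0 := by
  have hpi : HasBoxExponent (univ.pi fun _ : Fin n => A) (n * s) := by
    simpa only [Finset.sum_const, Finset.card_univ, Fintype.card_fin, nsmul_eq_mul] using
      HasBoxExponent.pi fun _ : Fin n => hA
  have hconst : LipschitzWith 1 (Function.const (Fin n) : E → Fin n → E) :=
    .mk_one dist_pi_const_le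
  refine (hpi.sub ((hasBoxExponent_of_isBounded hB).image hconst)).addHaar_closure_eq_zero _ ?_
  rw [finrank_pi_fintype, Finset.sum_const, Finset.card_univ, Fintype.card_fin, smul_eq_mul]
  exact_mod_cast hn

variable {μ}

theorem exists_forall_mem_countable_sub_mem {D : Set E} (hD : packingDim D < finrank ℝ E)
    {B : Set E} (hB : MeasurableSet B) (hpos : 0 < μ B) :
    ∃ f : (ℕ → Bool) → E, (∀ c, f c ∈ B) ∧ ∀ t, {c | f c - t ∈ D}.Countable := by
  obtain ⟨s, hDs, hs⟩ := ENNReal.lt_iff_exists_nnreal_btwn.1 hD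
  obtain ⟨A, hDA, hA⟩ := exists_hasBoxExponent_of_packingDim_lt hDs
  obtain ⟨n, hn⟩ := exists_nat_mul_add_lt_nat_mul
    (show s < finrank ℝ E from mod_cast hs) (finrank ℝ E)
  obtain ⟨f, hfB, hf⟩ := exists_forall_mem_injective_comp_notMem_of_measure_pos hB hpos
    (Z := fun p : ℕ × ℕ => closure
      (univ.pi (fun _ : Fin n => A p.1) - Function.const (Fin n) '' Metric.ball 0 p.2))
    (fun _ => isClosed_closure)
    fun p => (hA p.1).pi_closure_pi_sub_const_eq_zero μ Metric.isBounded_ball hn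
  have hfin : ∀ t i, {c | f c - t ∈ A i}.Finite := fun t i => by
    by_contra hinf
    let e := Set.Infinite.natEmbedding _ hinf
    obtain ⟨k, hk⟩ := exists_nat_gt ‖-t‖
    refine hf (fun j => e j) ?_ (i, k) (subset_closure ⟨fun j => f (e j) - t, fun j _ => (e j).2,
      _, mem_image_of_mem _ (mem_ball_zero_iff.2 hk), funext fun j => ?_⟩)
    · exact Subtype.val_injective.comp (e.injective.comp Fin.val_injective)
    · simp
  refine ⟨f, hfB, fun t => (countable_iUnion fun i => (hfin t i).countable).mono fun c hc => ?_⟩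
  obtain ⟨i, hi⟩ := mem_iUnion.1 (hDA hc)
  exact mem_iUnion.2 ⟨i, hi⟩

theorem exists_mem_forall_sub_notMem {D : Set E} (hD : packingDim D < finrank ℝ E)
    {B : Set E} (hB : MeasurableSet B) (hpos : 0 < μ B) {S : Set E} (hS : #S < 𝔠) :
    ∃ x ∈ B, ∀ t ∈ S, x - t ∉ D := by
  obtain ⟨f, hfB, hf⟩ := exists_forall_mem_countable_sub_mem hD hB hpos
  have hcantor : #(ℕ → Bool) = 𝔠 := by simp
  obtain ⟨c, hc⟩ := exists_forall_notMem_of_countable (hcantor ▸ aleph0_lt_continuum)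
    (by simpa using hS) fun t : S => hf t
  exact ⟨f c, hfB c, fun t ht => hc ⟨t, ht⟩⟩

variable (μ)

theorem exists_measure_pos_pairwise_sub_notMem {D : Set E} (hneg : -D = D)
    (hD : packingDim D < finrank ℝ E) :
    ∃ X : Set E, 0 < μ X ∧ X.Pairwise fun x y => x - y ∉ D := by
  have : Std.Symm fun x y => x - y ∉ D := ⟨fun x y hxy hyx => hxy (by
    rwa [← hneg, Set.mem_neg, neg_sub])⟩
  exact exists_measure_pos_pairwise μ fun B hB hpos S hS =>
    exists_mem_forall_sub_notMem hD hB hpos hS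

theorem stmt4_general {K : Set E} (hdim : packingDim K < finrank ℝ E / 2) :
    ∃ X : Set E, 0 < μ X ∧ ∀ t : E, (K ∩ (fun x => x + t) '' X).Subsingleton := by
  have hsub : packingDim (K - K) < finrank ℝ E :=
    calc packingDim (K - K) ≤ packingDim K + packingDim K := packingDim_sub_le K K
      _ < finrank ℝ E / 2 + finrank ℝ E / 2 := ENNReal.add_lt_add hdim hdim
      _ = finrank ℝ E := ENNReal.add_halves _
  obtain ⟨X, hX, hXK⟩ := exists_measure_pos_pairwise_sub_notMem μ (neg_sub K K) hsub
  refine ⟨X, hX, ?_⟩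
  rintro t _ ⟨hxK, x, hx, rfl⟩ _ ⟨hyK, y, hy, rfl⟩
  by_contra hxy
  refine hXK hx hy (fun h => hxy (congrArg (· + t) h)) ?_
  exact add_sub_add_right_eq_sub x y t ▸ sub_mem_sub hxK hyK

end AddHaar

theorem stmt4 (K : Set ℝ) (hne : K.Nonempty) (hcomp : IsCompact K) (hperf : Perfect K)
    (htd : IsTotallyDisconnected K) (hdim : packingDim K < 1 / 2) :
    ∃ X : Set ℝ, 0 < volume X ∧
      ∀ t : ℝ, (K ∩ (fun x => x + t) '' X).Subsingleton :=
  stmt4_general volume (by simpa using hdim)
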